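/- Schwarz–Christoffel map for a rectangle: fix k ∈ (0,1) and let ψ(z) = ∫₀^z dt/√((1−t²)(1−k²t²)), defined for z in the closed upper half-plane by integrating along paths in the closed upper half-plane (with the branch of the square root that is positive on (−1,1)). Then ψ is continuous on the closed upper half-plane, holomorphic and injective on the open upper half-plane ℍ, maps ℍ conformally onto the open rectangle R(k) with corners ±K(k²) and ±K(k²)+iK(1−k²) (i.e., {x+iy : −K(k²)<x<K(k²), 0<y<K(1−k²)}), and satisfies ψ(−1/k) = −K(k²)+iK(1−k²), ψ(−1) = −K(k²), ψ(1) = K(k²), ψ(1/k) = K(k²)+iK(1−k²). -/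

import Mathlib

open MeasureTheory Filter Topology

noncomputable section

/-- The complete elliptic integral of the first kind,
`K(u) = ∫₀¹ dt / √((1 − t²)(1 − u t²))`. -/
def ellipticK (u : ℝ) : ℝ :=
  ∫ t in (0 : ℝ)..1, 1 / Real.sqrt ((1 - t ^ 2) * (1 - u * t ^ 2))

/-!
Off its four zeros the square root `q` is continuous on a connected set, so its value at `0` fixes
the branch, and `ψ` is one explicit function with derivative `1 / q`. On the real line `ψ` runs
along the boundary of the rectangle, and the involution `z ↦ -1 / (k z)`, which corresponds to a
half-turn of the rectangle, gives the limit of `ψ` at `∞`. Hence the image of the upper half-plane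
is a nonempty bounded open set whose frontier lies in the frontier of the rectangle; as the
rectangle is convex, such a set is its whole interior. The same argument on the first quadrant shows
that `Re ψ` has the sign of `Re z`. On each part of the half-plane where that sign is constant,
`1 / q` avoids a line through the origin, so `ψ` is injective by the Noshiro–Warschawski criterion.
-/

namespace SchwarzChristoffel

section Frontier

lemma isCompact_insert_image {X Y : Type*} [TopologicalSpace X] [TopologicalSpace Y]
    {f : X → Y} {C : Set X} {l : Y} (hC : IsClosed C) (hf : ContinuousOn f C)
    (hl : Tendsto f (cocompact X ⊓ 𝓟 C) (𝓝 l)) : IsCompact (insert l (f '' C)) := by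
  have hval : Tendsto ((↑) : C → X) (cocompact C) (cocompact X ⊓ 𝓟 C) :=
    tendsto_inf.2 ⟨hC.isClosedEmbedding_subtypeVal.tendsto_cocompact,
      tendsto_principal.2 (Eventually.of_forall fun x => x.2)⟩
  rw [← Set.range_domRestrict]
  exact (hl.comp hval).isCompact_insert_range_of_cocompact hf.domRestrict

lemma frontier_image_subset {X Y : Type*} [TopologicalSpace X] [TopologicalSpace Y] [T2Space Y]
    {f : X → Y} {U : Set X} {l : Y} (hU : IsOpen U) (hfU : IsOpen (f '' U))
    (hf : ContinuousOn f (closure U)) (hl : Tendsto f (cocompact X ⊓ 𝓟 (closure U)) (𝓝 l)) :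
    frontier (f '' U) ⊆ insert l (f '' frontier U) := by
  have hclosure : closure (f '' U) ⊆ insert l (f '' closure U) :=
    closure_minimal ((Set.image_mono subset_closure).trans (Set.subset_insert _ _))
      (isCompact_insert_image isClosed_closure hf hl).isClosed
  rw [hfU.frontier_eq]
  rintro y ⟨hy, hyU⟩
  obtain rfl | ⟨x, hx, rfl⟩ := hclosure hy
  · exact Set.mem_insert _ _
  · refine Or.inr ⟨x, ?_, rfl⟩
    rw [hU.frontier_eq]
    exact ⟨hx, fun hxU => hyU ⟨x, hxU, rfl⟩⟩

variable {E : Type*} [NormedAddCommGroup E] [NormedSpace ℝ E] {W C : Set E}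

lemma exists_nonneg_add_smul_mem_frontier (hWo : IsOpen W) (hWb : Bornology.IsBounded W) {w v : E}
    (hw : w ∈ W) (hv : v ≠ 0) : ∃ t : ℝ, 0 ≤ t ∧ w + t • v ∈ frontier W := by
  by_contra! hmiss
  have hray : IsPreconnected ((fun t : ℝ => w + t • v) '' Set.Ici 0) :=
    isPreconnected_Ici.image _ (by fun_prop)
  have hrayW : (fun t : ℝ => w + t • v) '' Set.Ici 0 ⊆ W := by
    refine hray.subset_of_closure_inter_subset hWo ⟨w, ⟨0, Set.self_mem_Ici, by simp⟩, hw⟩ ?_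
    rintro _ ⟨hclosure, t, ht, rfl⟩
    by_contra hnot
    exact hmiss t ht (hWo.frontier_eq ▸ ⟨hclosure, hnot⟩)
  obtain ⟨R, hR, hball⟩ := hWb.subset_closedBall_lt 0 w
  have hv' : 0 < ‖v‖ := norm_pos_iff.2 hv
  have hfar := hball (hrayW ⟨(R + 1) / ‖v‖, by simp only [Set.mem_Ici]; positivity, rfl⟩)
  simp only [Metric.mem_closedBall, dist_self_add_left, norm_smul, Real.norm_eq_abs, abs_div,
    abs_norm, div_mul_cancel₀ _ hv'.ne'] at hfar
  linarith [le_abs_self (R + 1)]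

lemma subset_convexHull_frontier [Nontrivial E] (hWo : IsOpen W) (hWb : Bornology.IsBounded W) :
    W ⊆ convexHull ℝ (frontier W) := by
  intro w hw
  obtain ⟨v, hv⟩ := exists_ne (0 : E)
  obtain ⟨s, hs, hs'⟩ := exists_nonneg_add_smul_mem_frontier hWo hWb hw hv
  obtain ⟨t, ht, ht'⟩ := exists_nonneg_add_smul_mem_frontier hWo hWb hw (neg_ne_zero.2 hv)
  have hw_mem : w ∈ segment ℝ (w + s • v) (w + t • -v) := by
    rw [mem_segment_iff_sameRay]
    simpa using (SameRay.refl (R := ℝ) v).nonneg_smul_left hs |>.nonneg_smul_right ht |>.neg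
  exact (convex_convexHull ℝ _).segment_subset (subset_convexHull ℝ _ hs')
    (subset_convexHull ℝ _ ht') hw_mem

lemma subset_interior_of_frontier_subset [Nontrivial E] (hWo : IsOpen W)
    (hWb : Bornology.IsBounded W) (hC : Convex ℝ C) (h : frontier W ⊆ C) : W ⊆ interior C :=
  interior_maximal ((subset_convexHull_frontier hWo hWb).trans (convexHull_min h hC)) hWo

lemma eq_interior_of_frontier_subset_frontier [Nontrivial E] (hWo : IsOpen W)
    (hWb : Bornology.IsBounded W) (hWne : W.Nonempty) (hCc : IsClosed C) (hC : Convex ℝ C)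
    (h : frontier W ⊆ frontier C) : W = interior C := by
  have hWC : W ⊆ interior C :=
    subset_interior_of_frontier_subset hWo hWb hC (h.trans hCc.frontier_subset)
  refine hWC.antisymm (hC.interior.isPreconnected.subset_of_closure_inter_subset hWo ?_ ?_)
  · simpa [Set.inter_eq_right.2 hWC] using hWne
  · rintro x ⟨hxW, hxC⟩
    by_contra hx
    have : x ∈ frontier C := h ⟨hxW, by rwa [hWo.interior_eq]⟩
    exact this.2 hxC

end Frontier

section Derivative

variable {𝕜 : Type*} [RCLike 𝕜]

lemma eqOn_const_of_hasDerivAt_eq_zero {G : Type*} [NormedAddCommGroup G] [NormedSpace 𝕜 G]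
    {f : 𝕜 → G} {U S : Set 𝕜} (hU : IsOpen U)
    (hUc : IsPreconnected U) (hUS : U ⊆ S) (hSU : S ⊆ closure U) (hf : ContinuousOn f S)
    (hf' : ∀ z ∈ U, HasDerivAt f 0 z) {z₀ : 𝕜} (hz₀ : z₀ ∈ S) :
    Set.EqOn f (fun _ => f z₀) S := by
  obtain ⟨c, hc⟩ := hU.exists_is_const_of_deriv_eq_zero hUc
    (fun z hz => (hf' z hz).differentiableAt.differentiableWithinAt) fun z hz => (hf' z hz).deriv
  have hS : Set.EqOn f (fun _ => c) S :=
    Set.EqOn.of_subset_closure hc hf continuousOn_const hUS hSU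
  exact fun z hz => (hS hz).trans (hS hz₀).symm

/-- The Noshiro–Warschawski criterion: the derivative stays off a line through the origin. -/
lemma injOn_of_re_mul_deriv_ne_zero {f f' : ℂ → ℂ} {C : Set ℂ} (hC : Convex ℝ C)
    (hf : ∀ z ∈ C, HasDerivWithinAt f (f' z) C z) (c : ℂ) (hc : ∀ z ∈ C, (c * f' z).re ≠ 0) :
    Set.InjOn f C := by
  intro z hz w hw hfzw
  by_contra hne
  have hwz : w - z ≠ 0 := sub_ne_zero.2 (Ne.symm hne)
  have hline : Set.MapsTo (AffineMap.lineMap (k := ℝ) z w) (Set.Icc 0 1) C := fun t ht =>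
    hC.lineMap_mem hz hw ht
  let g : ℝ → ℝ := fun t => (c / (w - z) * f (AffineMap.lineMap z w t)).re
  have hg : ∀ t ∈ Set.Icc (0 : ℝ) 1,
      HasDerivWithinAt g (c * f' (AffineMap.lineMap z w t)).re (Set.Icc 0 1) t := by
    intro t ht
    have hcomp := ((hf _ (hline ht)).scomp t AffineMap.hasDerivWithinAt_lineMap hline).const_mul
      (c / (w - z))
    refine (Complex.reCLM.hasFDerivAt.comp_hasDerivWithinAt t hcomp).congr_deriv ?_
    rw [Complex.reCLM_apply, smul_eq_mul, ← mul_assoc, div_mul_cancel₀ c hwz]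
  obtain ⟨t, ht, hzero⟩ := exists_hasDerivAt_eq_zero (f := g) zero_lt_one
    (fun t ht => (hg t ht).continuousWithinAt) (by simp [g, hfzw])
    fun t ht => (hg t (Set.Ioo_subset_Icc_self ht)).hasDerivAt (Icc_mem_nhds ht.1 ht.2)
  exact hc _ (hline (Set.Ioo_subset_Icc_self ht)) hzero

lemma differentiableWithinAt_of_sq {f : 𝕜 → 𝕜} {S : Set 𝕜} {z : 𝕜}
    (hf : ContinuousWithinAt f S z) (hsq : DifferentiableWithinAt 𝕜 (fun w => f w ^ 2) S z)
    (hz : f z ≠ 0) : DifferentiableWithinAt 𝕜 f S z := by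
  have hslope : HasDerivWithinAt f (derivWithin (fun w => f w ^ 2) S z / (f z + f z)) S z := by
    refine hasDerivWithinAt_iff_tendsto_slope.2 ?_
    have hsum : Tendsto (fun w => f w + f z) (𝓝[S \ {z}] z) (𝓝 (f z + f z)) :=
      (hf.mono Set.sdiff_subset).add_const _
    have hne : f z + f z ≠ 0 := by simpa using hz
    refine ((hasDerivWithinAt_iff_tendsto_slope.1 hsq.hasDerivWithinAt).div hsum hne).congr' ?_
    filter_upwards [hsum.eventually_ne hne] with w hw
    rw [Pi.div_apply, slope_def_field, slope_def_field, sq_sub_sq, div_right_comm,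
      mul_div_cancel_left₀ _ hw]
  exact hslope.differentiableWithinAt

end Derivative

/-- The integral of `f` along the segment from `0` to `z`. -/
def radialIntegral (f : ℂ → ℂ) (z : ℂ) : ℂ := ∫ s in (0 : ℝ)..1, z * f (s * z)

/-- The integrand of `radialIntegral` parametrized by the radius `t`. It is cut off at `t = ‖z‖`,
which makes the interval of integration independent of `z`. -/
def polarIntegrand (f : ℂ → ℂ) (z : ℂ) : ℝ → ℂ :=
  {t : ℝ | t ≤ ‖z‖}.indicator fun t => z / ‖z‖ * f (t * (z / ‖z‖))

section RadialIntegral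

variable {f : ℂ → ℂ} {S : Set ℂ} {z : ℂ}

lemma radialIntegral_zero (f : ℂ → ℂ) : radialIntegral f 0 = 0 := by simp [radialIntegral]

lemma radialIntegral_ofReal (f : ℂ → ℂ) (x : ℝ) :
    radialIntegral f x = ∫ t in (0 : ℝ)..x, f t := by
  simp only [radialIntegral, ← Complex.ofReal_mul, intervalIntegral.integral_const_mul]
  rw [← Complex.real_smul, intervalIntegral.smul_integral_comp_mul_right (fun t : ℝ => f t)]
  simp

open scoped ComplexConjugate in
lemma radialIntegral_neg_conj (hf : ∀ w, f (-conj w) = conj (f w)) (z : ℂ) :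
    radialIntegral f (-conj z) = -conj (radialIntegral f z) := by
  simp only [radialIntegral, ← intervalIntegral.intervalIntegral_conj,
    ← intervalIntegral.integral_neg]
  refine intervalIntegral.integral_congr fun s _ => ?_
  have hs : (s : ℂ) * -conj z = -conj (s * z) := by simp
  simp only [hs]
  rw [hf, map_mul, neg_mul]

lemma radialIntegral_eq_integral_polarIntegrand {T : ℝ} (hz : ‖z‖ ≤ T) :
    radialIntegral f z = ∫ t in (0 : ℝ)..T, polarIntegrand f z t := by
  rw [polarIntegrand, intervalIntegral.integral_indicator ⟨norm_nonneg z, hz⟩]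
  obtain rfl | hz0 := eq_or_ne z 0
  · simp [radialIntegral_zero]
  have hnorm : (‖z‖ : ℂ) ≠ 0 := by simpa using hz0
  have hsubst := intervalIntegral.smul_integral_comp_mul_left (a := 0) (b := 1)
    (fun t : ℝ => z / ‖z‖ * f (t * (z / ‖z‖))) ‖z‖
  rw [mul_zero, mul_one] at hsubst
  rw [← hsubst, radialIntegral, ← intervalIntegral.integral_smul]
  refine intervalIntegral.integral_congr fun s _ => ?_
  have hpoint : ((‖z‖ * s : ℝ) : ℂ) * (z / ‖z‖) = s * z := by push_cast; field_simp
  simp only [hpoint, Complex.real_smul, ← mul_assoc, mul_div_cancel₀ z hnorm]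

lemma norm_ofReal_mul_div_norm {t : ℝ} (ht : 0 ≤ t) (hz : z ≠ 0) : ‖(t : ℂ) * (z / ‖z‖)‖ = t := by
  simp [abs_of_nonneg ht, hz]

lemma ofReal_mul_div_norm_mem {t : ℝ} (hS : ∀ r : ℝ, 0 < r → ∀ w ∈ S, (r : ℂ) * w ∈ S)
    (ht : 0 < t) (hz : z ∈ S) (hz0 : z ≠ 0) : (t : ℂ) * (z / ‖z‖) ∈ S := by
  have hpos : 0 < t / ‖z‖ := div_pos ht (norm_pos_iff.2 hz0)
  convert hS _ hpos z hz using 1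
  push_cast
  ring

lemma norm_polarIntegrand_le {g : ℝ → ℝ} {t : ℝ}
    (hS : ∀ r : ℝ, 0 < r → ∀ w ∈ S, (r : ℂ) * w ∈ S) (ht : 0 < t) (hg : 0 ≤ g t)
    (hf : ∀ w ∈ S, ‖w‖ = t → ‖f w‖ ≤ g t) (hz : z ∈ S) : ‖polarIntegrand f z t‖ ≤ g t := by
  by_cases htz : t ∈ {t : ℝ | t ≤ ‖z‖}
  · have hz0 : z ≠ 0 := norm_pos_iff.1 (ht.trans_le htz)
    have hbound := hf _ (ofReal_mul_div_norm_mem hS ht hz hz0) (norm_ofReal_mul_div_norm ht.le hz0)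
    rw [polarIntegrand, Set.indicator_of_mem htz, norm_mul]
    simpa [hz0] using hbound
  · rwa [polarIntegrand, Set.indicator_of_notMem htz, norm_zero]

lemma continuousWithinAt_polarIntegrand {t : ℝ}
    (hS : ∀ r : ℝ, 0 < r → ∀ w ∈ S, (r : ℂ) * w ∈ S) (ht : 0 < t) (htz : t ≠ ‖z‖)
    (hf : ∀ w ∈ S, ‖w‖ = t → ContinuousWithinAt f S w) (hz : z ∈ S) :
    ContinuousWithinAt (fun w => polarIntegrand f w t) S z := by
  obtain hlt | hgt := lt_or_gt_of_ne htz
  · have hz0 : z ≠ 0 := norm_pos_iff.1 (ht.trans hlt)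
    have hunit : ContinuousAt (fun w : ℂ => w / ‖w‖) z :=
      continuousAt_id.div (by fun_prop) (by simpa using hz0)
    have hmaps : Tendsto (fun w : ℂ => (t : ℂ) * (w / ‖w‖)) (𝓝[S] z)
        (𝓝[S] ((t : ℂ) * (z / ‖z‖))) := by
      refine tendsto_nhdsWithin_iff.2
        ⟨(continuousAt_const.mul hunit).tendsto.mono_left nhdsWithin_le_nhds, ?_⟩
      filter_upwards [self_mem_nhdsWithin, nhdsWithin_le_nhds (eventually_ne_nhds hz0)]
        with w hw hw0
      exact ofReal_mul_div_norm_mem hS ht hw hw0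
    have hcont : ContinuousWithinAt (fun w : ℂ => w / ‖w‖ * f (t * (w / ‖w‖))) S z :=
      hunit.continuousWithinAt.mul ((hf _ (ofReal_mul_div_norm_mem hS ht hz hz0)
        (norm_ofReal_mul_div_norm ht.le hz0)).tendsto.comp hmaps)
    refine hcont.congr_of_eventuallyEq_of_mem ?_ hz
    filter_upwards [nhdsWithin_le_nhds (continuous_norm.continuousAt.eventually_const_lt hlt)]
      with w hw
    exact Set.indicator_of_mem (s := {t : ℝ | t ≤ ‖w‖}) hw.le _
  · refine continuousWithinAt_const.congr_of_eventuallyEq_of_mem (f := fun _ => 0) ?_ hz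
    filter_upwards [nhdsWithin_le_nhds (continuous_norm.continuousAt.eventually_lt_const hgt)]
      with w hw
    exact Set.indicator_of_notMem (s := {t : ℝ | t ≤ ‖w‖}) (not_le.2 hw) _

lemma continuousOn_radialIntegral {g : ℝ → ℝ}
    (hS : ∀ r : ℝ, 0 < r → ∀ w ∈ S, (r : ℂ) * w ∈ S) (hfm : Measurable f) (hg : ∀ r, 0 ≤ g r)
    (hgi : ∀ T : ℝ, 0 ≤ T → IntervalIntegrable g volume 0 T)
    (hf : ∀ᵐ r : ℝ, 0 < r → ∀ w ∈ S, ‖w‖ = r → ‖f w‖ ≤ g r ∧ ContinuousWithinAt f S w) :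
    ContinuousOn (radialIntegral f) S := by
  intro z hz
  have hT : 0 ≤ ‖z‖ + 1 := by positivity
  have hpolar : radialIntegral f =ᶠ[𝓝[S] z]
      fun w => ∫ t in (0 : ℝ)..‖z‖ + 1, polarIntegrand f w t := by
    filter_upwards [nhdsWithin_le_nhds
      (continuous_norm.continuousAt.eventually_lt_const (lt_add_one ‖z‖))] with w hw
    exact radialIntegral_eq_integral_polarIntegrand hw.le
  refine ContinuousWithinAt.congr_of_eventuallyEq_of_mem ?_ hpolar hz
  refine intervalIntegral.continuousWithinAt_of_dominated_interval (bound := g)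
    (Eventually.of_forall fun w => ?_) ?_ (hgi _ hT) ?_
  · exact ((by fun_prop : Measurable fun t : ℝ => w / ‖w‖ * f (t * (w / ‖w‖))).indicator
      measurableSet_Iic).aestronglyMeasurable
  · filter_upwards [self_mem_nhdsWithin] with w hw
    filter_upwards [hf] with t ht htT
    rw [Set.uIoc_of_le hT] at htT
    exact norm_polarIntegrand_le hS htT.1 (hg t) (fun u hu hut => (ht htT.1 u hu hut).1) hw
  · filter_upwards [hf, Measure.ae_ne volume ‖z‖] with t ht htz htT
    rw [Set.uIoc_of_le hT] at htT
    exact continuousWithinAt_polarIntegrand hS htT.1 htz (fun u hu hut => (ht htT.1 u hu hut).2) hz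

lemma hasDerivWithinAt_radialIntegral (hS : Convex ℝ S) (h0 : 0 ∈ S)
    (hf : DifferentiableOn ℂ f S) (hz : z ∈ S) :
    HasDerivWithinAt (radialIntegral f) (f z) S z := by
  obtain ⟨F, hF⟩ := hS.exists_forall_hasDerivWithinAt hf
  have hprimitive : Set.EqOn (radialIntegral f) (fun w => F w - F 0) S := by
    intro w hw
    have hmaps : Set.MapsTo (fun s : ℝ => (s : ℂ) * w) (Set.Icc 0 1) S := fun s hs => by
      simpa using hS.smul_mem_of_zero_mem h0 hw hs
    have hderiv : ∀ s ∈ Set.Icc (0 : ℝ) 1, HasDerivWithinAt (fun s : ℝ => F (s * w))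
        (w * f (s * w)) (Set.Icc 0 1) s := fun s hs => by
      have hline : HasDerivWithinAt (fun s : ℝ => (s : ℂ) * w) w (Set.Icc 0 1) s := by
        simpa using (Complex.ofRealCLM.hasDerivWithinAt (x := s)).mul_const w
      simpa [Function.comp_def] using (hF _ (hmaps hs)).scomp s hline hmaps
    have hcont : ContinuousOn (fun s : ℝ => w * f (s * w)) (Set.uIcc 0 1) := by
      rw [Set.uIcc_of_le zero_le_one]
      exact continuousOn_const.mul (hf.continuousOn.comp (by fun_prop) hmaps)
    simpa [radialIntegral] using intervalIntegral.integral_eq_sub_of_hasDerivAt_of_le zero_le_one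
      (fun s hs => (hderiv s hs).continuousWithinAt)
      (fun s hs => (hderiv s (Set.Ioo_subset_Icc_self hs)).hasDerivAt (Icc_mem_nhds hs.1 hs.2))
      hcont.intervalIntegrable
  exact ((hF z hz).sub_const (F 0)).congr hprimitive (hprimitive hz)

end RadialIntegral

section Density

/-- The modulus of the elliptic integrand on the real line. -/
def ellipticDensity (k t : ℝ) : ℝ := (√|(1 - t ^ 2) * (1 - k ^ 2 * t ^ 2)|)⁻¹

variable {k : ℝ}

lemma ellipticDensity_nonneg (k t : ℝ) : 0 ≤ ellipticDensity k t :=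
  inv_nonneg.2 (Real.sqrt_nonneg _)

lemma intervalIntegrable_inv_sqrt_abs (a b : ℝ) :
    IntervalIntegrable (fun t : ℝ => (√|t|)⁻¹) volume a b := by
  have hcpow : IntervalIntegrable (fun t : ℝ => (t : ℂ) ^ ((-(1 / 2) : ℝ) : ℂ)) volume a b :=
    intervalIntegral.intervalIntegrable_cpow' (by norm_num)
  refine hcpow.norm.congr fun t _ => ?_
  simp only [Complex.norm_cpow_real, Complex.norm_real, Real.norm_eq_abs,
    Real.rpow_neg (abs_nonneg t), Real.sqrt_eq_rpow]

lemma inv_sqrt_mul_le {a b d : ℝ} (ha : 0 ≤ a) (hb : 0 ≤ b) (hd : 0 < d) (h : d ≤ a + b) :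
    (√(a * b))⁻¹ ≤ (√d)⁻¹ * ((√a)⁻¹ + (√b)⁻¹) := by
  obtain rfl | ha := ha.eq_or_lt
  · rw [zero_mul, Real.sqrt_zero, inv_zero]
    positivity
  obtain rfl | hb := hb.eq_or_lt
  · rw [mul_zero, Real.sqrt_zero, inv_zero]
    positivity
  have hsum : √d ≤ √a + √b := by
    refine Real.sqrt_le_iff.2 ⟨by positivity, ?_⟩
    rw [add_sq, Real.sq_sqrt ha.le, Real.sq_sqrt hb.le]
    linarith [mul_nonneg (Real.sqrt_nonneg a) (Real.sqrt_nonneg b)]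
  rw [Real.sqrt_mul ha.le, inv_add_inv (by positivity) (by positivity), ← div_eq_inv_mul,
    le_div_iff₀ (by positivity), ← div_eq_inv_mul]
  gcongr

lemma ellipticDensity_le (hk : 0 < k) (hk1 : k < 1) {t : ℝ} (ht : 0 ≤ t) :
    ellipticDensity k t ≤ (√(1 - k))⁻¹ * ((√|t - 1|)⁻¹ + (√|k * t - 1|)⁻¹) := by
  have hfactor : |(1 - t ^ 2) * (1 - k ^ 2 * t ^ 2)| =
      |t - 1| * |k * t - 1| * ((t + 1) * (k * t + 1)) := by
    rw [← abs_of_nonneg (by positivity : 0 ≤ (t + 1) * (k * t + 1)), ← abs_mul, ← abs_mul]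
    congr 1
    ring
  have hone : (√((t + 1) * (k * t + 1)))⁻¹ ≤ 1 :=
    inv_le_one_of_one_le₀ (Real.one_le_sqrt.2 (one_le_mul_of_one_le_of_one_le
      (le_add_of_nonneg_left ht) (le_add_of_nonneg_left (by positivity))))
  have hgap : 1 - k ≤ |t - 1| + |k * t - 1| :=
    calc 1 - k ≤ |k * (t - 1) - (k * t - 1)| := by
          rw [show k * (t - 1) - (k * t - 1) = 1 - k by ring]
          exact le_abs_self _
      _ ≤ k * |t - 1| + |k * t - 1| := by
          rw [← abs_of_pos hk, ← abs_mul, abs_of_pos hk]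
          exact abs_sub _ _
      _ ≤ |t - 1| + |k * t - 1| := by
          gcongr
          exact mul_le_of_le_one_left (abs_nonneg _) hk1.le
  calc ellipticDensity k t
      = (√(|t - 1| * |k * t - 1|))⁻¹ * (√((t + 1) * (k * t + 1)))⁻¹ := by
        rw [ellipticDensity, hfactor, Real.sqrt_mul (by positivity), mul_inv]
    _ ≤ (√(|t - 1| * |k * t - 1|))⁻¹ := mul_le_of_le_one_right (by positivity) hone
    _ ≤ _ := inv_sqrt_mul_le (abs_nonneg _) (abs_nonneg _) (sub_pos.2 hk1) hgap

lemma intervalIntegrable_ellipticDensity (hk : 0 < k) (hk1 : k < 1) {a b : ℝ}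
    (ha : 0 ≤ a) (hb : 0 ≤ b) : IntervalIntegrable (ellipticDensity k) volume a b := by
  have hone : IntervalIntegrable (fun t : ℝ => (√|t - 1|)⁻¹) volume a b := by
    simpa using (intervalIntegrable_inv_sqrt_abs (a - 1) (b - 1)).comp_sub_right 1
  have hinv : IntervalIntegrable (fun t : ℝ => (√|k * t - 1|)⁻¹) volume a b := by
    simpa [hk.ne'] using ((intervalIntegrable_inv_sqrt_abs (k * a - 1)
      (k * b - 1)).comp_sub_right 1).comp_mul_left (c := k)
  have hmeas : Measurable (ellipticDensity k) := by unfold ellipticDensity; fun_prop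
  refine ((hone.add hinv).const_mul (√(1 - k))⁻¹).mono_fun' hmeas.aestronglyMeasurable ?_
  filter_upwards [ae_restrict_mem measurableSet_uIoc] with t ht
  rw [Real.norm_of_nonneg (ellipticDensity_nonneg k t)]
  exact ellipticDensity_le hk hk1 ((le_min ha hb).trans ht.1.le)

lemma integral_ellipticDensity_zero_one (hk : |k| ≤ 1) :
    ∫ t in (0 : ℝ)..1, ellipticDensity k t = ellipticK (k ^ 2) := by
  refine intervalIntegral.integral_congr fun t ht => ?_
  rw [Set.uIcc_of_le zero_le_one] at ht
  have ht1 : t ^ 2 ≤ 1 := pow_le_one₀ ht.1 ht.2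
  have hkt : k ^ 2 * t ^ 2 ≤ 1 := mul_le_one₀ (by rwa [sq_le_one_iff_abs_le_one]) (sq_nonneg t) ht1
  simp only [ellipticDensity, one_div]
  rw [abs_of_nonneg (mul_nonneg (sub_nonneg.2 ht1) (sub_nonneg.2 hkt))]

lemma one_sub_mul_sq_pos {m s : ℝ} (hm : 0 ≤ m) (hm1 : m < 1) (hs : s ∈ Set.Icc (0 : ℝ) 1) :
    0 < 1 - m * s ^ 2 :=
  sub_pos.2 ((mul_le_of_le_one_right hm (pow_le_one₀ hs.1 hs.2)).trans_lt hm1)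

lemma hasDerivAt_inv_sqrt {m s : ℝ} (hs : 0 < 1 - m * s ^ 2) :
    HasDerivAt (fun s => (√(1 - m * s ^ 2))⁻¹)
      (m * s / ((1 - m * s ^ 2) * √(1 - m * s ^ 2))) s := by
  have hquad : HasDerivAt (fun s : ℝ => 1 - m * s ^ 2) (-(m * (2 * s))) s := by
    simpa using ((hasDerivAt_pow 2 s).const_mul m).const_sub 1
  refine ((hquad.sqrt hs.ne').inv (Real.sqrt_pos.2 hs).ne').congr_deriv ?_
  have := (Real.sqrt_pos.2 hs).ne'
  rw [Real.sq_sqrt hs.le]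
  field_simp

lemma deriv_mul_ellipticDensity_inv_sqrt (hk : 0 < k) (hk1 : k < 1) {s : ℝ}
    (hs : s ∈ Set.Ioo (0 : ℝ) 1) :
    (1 - k ^ 2) * s / ((1 - (1 - k ^ 2) * s ^ 2) * √(1 - (1 - k ^ 2) * s ^ 2)) *
      ellipticDensity k (√(1 - (1 - k ^ 2) * s ^ 2))⁻¹ =
        1 / √((1 - s ^ 2) * (1 - (1 - k ^ 2) * s ^ 2)) := by
  have hm : 0 < 1 - k ^ 2 := sub_pos.2 (pow_lt_one₀ hk.le hk1 two_ne_zero)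
  have hd := one_sub_mul_sq_pos hm.le (sub_lt_self 1 (pow_pos hk 2)) (Set.Ioo_subset_Icc_self hs)
  have hs0 : 0 < s := hs.1
  have hs1 : 0 < 1 - s ^ 2 := sub_pos.2 (pow_lt_one₀ hs.1.le hs.2 two_ne_zero)
  set d := 1 - (1 - k ^ 2) * s ^ 2 with hd_def
  have hquartic : (1 - d⁻¹) * (1 - k ^ 2 * d⁻¹) = -(((1 - k ^ 2) * s / d) ^ 2 * (1 - s ^ 2)) := by
    field_simp
    rw [hd_def]
    ring
  rw [ellipticDensity, inv_pow, Real.sq_sqrt hd.le, hquartic, abs_neg,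
    abs_of_nonneg (by positivity), Real.sqrt_mul (sq_nonneg _), Real.sqrt_sq (by positivity),
    Real.sqrt_mul hs1.le]
  have := Real.sqrt_pos.2 hd
  have := Real.sqrt_pos.2 hs1
  field_simp

/-- The substitution `t = 1 / √(1 - (1 - k²) s²)` exchanges `k²` with the complementary
parameter `1 - k²`. -/
lemma integral_ellipticDensity_one_inv (hk : 0 < k) (hk1 : k < 1) :
    ∫ t in (1 : ℝ)..1 / k, ellipticDensity k t = ellipticK (1 - k ^ 2) := by
  have hm : 0 ≤ 1 - k ^ 2 := sub_nonneg.2 (pow_le_one₀ hk.le hk1.le)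
  have hpos : ∀ s ∈ Set.uIcc (0 : ℝ) 1, 0 < 1 - (1 - k ^ 2) * s ^ 2 := fun s hs =>
    one_sub_mul_sq_pos hm (sub_lt_self 1 (pow_pos hk 2)) (by rwa [Set.uIcc_of_le zero_le_one] at hs)
  have hsubst := intervalIntegral.integral_deriv_smul_comp_of_deriv_nonneg
    (f := fun s => (√(1 - (1 - k ^ 2) * s ^ 2))⁻¹) (g := ellipticDensity k) (a := 0) (b := 1)
    (ContinuousOn.inv₀ (by fun_prop) fun s hs => (Real.sqrt_pos.2 (hpos s hs)).ne')
    (fun s hs => hasDerivAt_inv_sqrt (hpos s (Set.Ioo_subset_Icc_self hs)))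
    (fun s hs => by
      have := hpos s (Set.Ioo_subset_Icc_self hs)
      have : 0 ≤ s := (by simpa using hs.1 : 0 < s).le
      positivity)
  have hends : (√(1 - (1 - k ^ 2) * 0 ^ 2))⁻¹ = 1 ∧ (√(1 - (1 - k ^ 2) * 1 ^ 2))⁻¹ = 1 / k := by
    constructor
    · simp
    · simp [Real.sqrt_sq hk.le]
  rw [hends.1, hends.2] at hsubst
  rw [← hsubst]
  exact intervalIntegral.integral_congr_Ioo_of_le zero_le_one fun s hs =>
    deriv_mul_ellipticDensity_inv_sqrt hk hk1 hs
lemma integral_ellipticDensity_nonneg (k : ℝ) {a b : ℝ} (hab : a ≤ b) :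
    0 ≤ ∫ t in a..b, ellipticDensity k t :=
  intervalIntegral.integral_nonneg hab fun t _ => ellipticDensity_nonneg k t

lemma integral_ellipticDensity_mem_Icc (hk : 0 < k) (hk1 : k < 1) {a x b : ℝ} (ha : 0 ≤ a)
    (hx : x ∈ Set.Icc a b) :
    ∫ t in a..x, ellipticDensity k t ∈ Set.Icc 0 (∫ t in a..b, ellipticDensity k t) :=
  ⟨integral_ellipticDensity_nonneg k hx.1, intervalIntegral.integral_mono_interval le_rfl hx.1 hx.2
    (Eventually.of_forall (ellipticDensity_nonneg k))
    (intervalIntegrable_ellipticDensity hk hk1 ha (ha.trans (hx.1.trans hx.2)))⟩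

lemma ellipticK_sq_nonneg (hk : |k| ≤ 1) : 0 ≤ ellipticK (k ^ 2) :=
  integral_ellipticDensity_zero_one hk ▸ integral_ellipticDensity_nonneg k zero_le_one

lemma ellipticK_one_sub_sq_nonneg (hk : 0 < k) (hk1 : k < 1) :
    0 ≤ ellipticK (1 - k ^ 2) :=
  integral_ellipticDensity_one_inv hk hk1 ▸
    integral_ellipticDensity_nonneg k ((one_le_div hk).2 hk1.le)

end Density

/-- The square root on the closed upper half-plane with values in the closed first quadrant. Unlike
`Complex.sqrt`, with which it agrees there, it is continuous on all of `ℂ`. -/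
def upperSqrt (w : ℂ) : ℂ := √((‖w‖ + w.re) / 2) + √((‖w‖ - w.re) / 2) * Complex.I

/-- The branch of `√((1 - z²)(1 - k²z²))` on the closed upper half-plane which is positive
on `(-1, 1)`. -/
def ellipticBranch (k : ℝ) (z : ℂ) : ℂ :=
  -(upperSqrt (z - 1) * upperSqrt (z + 1) * upperSqrt (k * z - 1) * upperSqrt (k * z + 1))

section UpperSqrt

lemma continuous_upperSqrt : Continuous upperSqrt := by
  unfold upperSqrt
  fun_prop

lemma upperSqrt_sq {w : ℂ} (hw : 0 ≤ w.im) : upperSqrt w ^ 2 = w := by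
  have hsqrt : upperSqrt w = Complex.sqrt w := by
    simp [upperSqrt, Complex.sqrt_eq_real_add_ite, hw]
  rw [hsqrt, Complex.sqrt, Complex.cpow_ofNat_inv_pow]

lemma upperSqrt_ofReal_of_nonneg {x : ℝ} (hx : 0 ≤ x) : upperSqrt x = √|x| := by
  simp [upperSqrt, abs_of_nonneg hx]

lemma upperSqrt_ofReal_of_nonpos {x : ℝ} (hx : x ≤ 0) : upperSqrt x = √|x| * Complex.I := by
  simp [upperSqrt, abs_of_nonpos hx, ← neg_add']

open scoped ComplexConjugate in
lemma upperSqrt_neg_conj (w : ℂ) : upperSqrt (-conj w) = Complex.I * conj (upperSqrt w) := by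
  simp only [upperSqrt, norm_neg, RCLike.norm_conj, Complex.neg_re, Complex.conj_re, map_add,
    map_mul, Complex.conj_ofReal, Complex.conj_I, sub_neg_eq_add, ← sub_eq_add_neg]
  linear_combination (√((‖w‖ - w.re) / 2) : ℂ) * Complex.I_sq

end UpperSqrt

section Branch

variable {k : ℝ} {z : ℂ}

lemma continuous_ellipticBranch (k : ℝ) : Continuous (ellipticBranch k) := by
  have := continuous_upperSqrt
  unfold ellipticBranch
  fun_prop

lemma ellipticBranch_zero (k : ℝ) : ellipticBranch k 0 = 1 := by
  simp [ellipticBranch, upperSqrt]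

lemma ellipticBranch_sq (hk : 0 ≤ k) (hz : 0 ≤ z.im) :
    ellipticBranch k z ^ 2 = (1 - z ^ 2) * (1 - (k : ℂ) ^ 2 * z ^ 2) := by
  have hkz : 0 ≤ k * z.im := mul_nonneg hk hz
  rw [ellipticBranch, neg_sq, mul_pow, mul_pow, mul_pow, upperSqrt_sq (by simpa),
    upperSqrt_sq (by simpa), upperSqrt_sq (by simpa), upperSqrt_sq (by simpa)]
  ring

open scoped ComplexConjugate in
lemma ellipticBranch_neg_conj (k : ℝ) (z : ℂ) :
    ellipticBranch k (-conj z) = conj (ellipticBranch k z) := by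
  have hsub (w : ℂ) : -conj w - 1 = -conj (w + 1) := by rw [map_add, map_one, neg_add']
  have hadd (w : ℂ) : -conj w + 1 = -conj (w - 1) := by simp [neg_add_eq_sub]
  have hmul : (k : ℂ) * -conj z = -conj (k * z) := by simp
  simp only [ellipticBranch, hmul, hsub, hadd, upperSqrt_neg_conj]
  rw [map_neg, map_mul, map_mul, map_mul]
  linear_combination -(conj (upperSqrt (z + 1)) * conj (upperSqrt (z - 1)) *
    conj (upperSqrt (k * z + 1)) * conj (upperSqrt (k * z - 1))) * Complex.I_pow_four

lemma sqrt_abs_quartic (k x : ℝ) : √|(1 - x ^ 2) * (1 - k ^ 2 * x ^ 2)| =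
    √|x - 1| * √|x + 1| * √|k * x - 1| * √|k * x + 1| := by
  rw [← Real.sqrt_mul (by positivity), ← Real.sqrt_mul (by positivity),
    ← Real.sqrt_mul (by positivity), ← abs_mul, ← abs_mul, ← abs_mul]
  ring_nf

lemma ellipticBranch_ofReal (k x : ℝ) : ellipticBranch k x =
    -(upperSqrt (x - 1 : ℝ) * upperSqrt (x + 1 : ℝ) * upperSqrt (k * x - 1 : ℝ) *
      upperSqrt (k * x + 1 : ℝ)) := by
  push_cast
  rfl

lemma ellipticBranch_ofReal_of_mem_Icc (hk : 0 ≤ k) (hk1 : k ≤ 1) {x : ℝ}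
    (hx : x ∈ Set.Icc (0 : ℝ) 1) :
    ellipticBranch k x = √|(1 - x ^ 2) * (1 - k ^ 2 * x ^ 2)| := by
  have hkx : 0 ≤ k * x := mul_nonneg hk hx.1
  have hkx1 : k * x ≤ 1 := mul_le_one₀ hk1 hx.1 hx.2
  rw [ellipticBranch_ofReal, upperSqrt_ofReal_of_nonpos (sub_nonpos.2 hx.2),
    upperSqrt_ofReal_of_nonneg (by linarith [hx.1]), upperSqrt_ofReal_of_nonpos (sub_nonpos.2 hkx1),
    upperSqrt_ofReal_of_nonneg (by linarith), sqrt_abs_quartic]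
  push_cast
  linear_combination -(√|x - 1| * √|x + 1| * √|k * x - 1| * √|k * x + 1| : ℂ) * Complex.I_sq

lemma ellipticBranch_ofReal_of_mem_Icc_inv (hk : 0 < k) {x : ℝ} (hx : x ∈ Set.Icc 1 (1 / k)) :
    ellipticBranch k x = -√|(1 - x ^ 2) * (1 - k ^ 2 * x ^ 2)| * Complex.I := by
  have hx0 : 0 ≤ x := zero_le_one.trans hx.1
  have hkx : 0 ≤ k * x := mul_nonneg hk.le hx0
  have hkx1 : k * x ≤ 1 := (le_div_iff₀' hk).1 hx.2
  rw [ellipticBranch_ofReal, upperSqrt_ofReal_of_nonneg (sub_nonneg.2 hx.1),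
    upperSqrt_ofReal_of_nonneg (by linarith), upperSqrt_ofReal_of_nonpos (sub_nonpos.2 hkx1),
    upperSqrt_ofReal_of_nonneg (by linarith), sqrt_abs_quartic]
  push_cast
  ring

lemma quartic_eq_zero_iff {F : Type*} [Field F] {κ x : F} (hκ : κ ≠ 0) :
    (1 - x ^ 2) * (1 - κ ^ 2 * x ^ 2) = 0 ↔ x ∈ ({1, -1, 1 / κ, -1 / κ} : Set F) := by
  simp only [mul_eq_zero, sub_eq_zero, ← mul_pow, eq_comm (a := (1 : F)), sq_eq_one_iff, or_assoc,
    Set.mem_insert_iff, Set.mem_singleton_iff, eq_div_iff hκ, mul_comm κ]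

lemma ellipticBranch_eq_zero_iff (hk : 0 < k) (hz : 0 ≤ z.im) :
    ellipticBranch k z = 0 ↔ z ∈ ({1, -1, (1 : ℂ) / k, -(1 : ℂ) / k} : Set ℂ) := by
  rw [← quartic_eq_zero_iff (by exact_mod_cast hk.ne'), ← ellipticBranch_sq hk.le hz,
    sq_eq_zero_iff]

lemma ellipticBranch_ne_zero (hk : 0 < k) (hz : 0 < z.im) : ellipticBranch k z ≠ 0 := by
  rw [Ne, ellipticBranch_eq_zero_iff hk hz.le]
  rintro (rfl | rfl | rfl | rfl) <;> simp [Complex.div_im] at hz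

lemma differentiableWithinAt_ellipticBranch (hk : 0 ≤ k) {S : Set ℂ}
    (hS : S ⊆ {z : ℂ | 0 ≤ z.im}) (hz : z ∈ S) (hne : ellipticBranch k z ≠ 0) :
    DifferentiableWithinAt ℂ (ellipticBranch k) S z := by
  refine differentiableWithinAt_of_sq (continuous_ellipticBranch k).continuousWithinAt ?_ hne
  have hpoly : DifferentiableWithinAt ℂ
      (fun w : ℂ => (1 - w ^ 2) * (1 - (k : ℂ) ^ 2 * w ^ 2)) S z := by fun_prop
  exact hpoly.congr (fun w hw => ellipticBranch_sq hk (hS hw)) (ellipticBranch_sq hk (hS hz))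

lemma sqrt_abs_quartic_norm_le (hk : 0 ≤ k) (hz : 0 ≤ z.im) :
    √|(1 - ‖z‖ ^ 2) * (1 - k ^ 2 * ‖z‖ ^ 2)| ≤ ‖ellipticBranch k z‖ := by
  refine Real.sqrt_le_iff.2 ⟨norm_nonneg _, ?_⟩
  have hfactor (w : ℂ) : |1 - ‖w‖| ≤ ‖1 - w‖ := by
    simpa using abs_norm_sub_norm_le 1 w
  rw [← norm_pow (ellipticBranch k z), ellipticBranch_sq hk hz, norm_mul, abs_mul]
  have h₁ := hfactor (z ^ 2)
  have h₂ := hfactor ((k : ℂ) ^ 2 * z ^ 2)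
  simp only [norm_mul, norm_pow, Complex.norm_real, Real.norm_of_nonneg hk] at h₁ h₂
  gcongr

lemma neg_inv_ofReal_mul_im (k : ℝ) (z : ℂ) :
    (-((k : ℂ) * z)⁻¹).im = k * z.im / Complex.normSq (k * z) := by
  rw [Complex.neg_im, Complex.inv_im, neg_div, neg_neg, Complex.im_ofReal_mul]

lemma neg_inv_ofReal_mul_im_nonneg (hk : 0 ≤ k) (hz : 0 ≤ z.im) : 0 ≤ (-((k : ℂ) * z)⁻¹).im := by
  rw [neg_inv_ofReal_mul_im]
  exact div_nonneg (mul_nonneg hk hz) (Complex.normSq_nonneg _)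

lemma neg_inv_ofReal_mul_im_pos (hk : 0 < k) (hz : 0 < z.im) : 0 < (-((k : ℂ) * z)⁻¹).im := by
  rw [neg_inv_ofReal_mul_im]
  have hz0 : z ≠ 0 := fun h => by simp [h] at hz
  exact div_pos (mul_pos hk hz) (Complex.normSq_pos.2 (by simp [hk.ne', hz0]))

/-- Both sides are branches of the same square root, so it is enough to compare them at the fixed
point `I / √k` of `z ↦ -1 / (k z)`. -/
lemma ellipticBranch_neg_inv (hk : 0 < k) (hz : 0 < z.im) :
    ellipticBranch k (-(k * z)⁻¹) * (k * z ^ 2) = -ellipticBranch k z := by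
  have hk' : (k : ℂ) ≠ 0 := by exact_mod_cast hk.ne'
  have hne : ∀ w : ℂ, 0 < w.im → w ≠ 0 := fun w hw h => by simp [h] at hw
  have hbranch := continuous_ellipticBranch k
  have hsqrt : (√k : ℂ) ^ 2 = k := by exact_mod_cast Real.sq_sqrt hk.le
  have hsqrt' : (√k : ℂ) ≠ 0 := fun h => hk' (by simpa [h] using hsqrt.symm)
  have hI : -((k : ℂ) * (Complex.I / √k))⁻¹ = Complex.I / √k := by
    rw [← hsqrt]
    field_simp
    simp
  have hpre : IsPreconnected {w : ℂ | 0 < w.im} := (convex_halfSpace_im_gt 0).isPreconnected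
  refine hpre.eq_of_sq_eq
    (f := fun w : ℂ => ellipticBranch k (-(k * w)⁻¹) * (k * w ^ 2))
    (g := fun w : ℂ => -ellipticBranch k w) (y := (Complex.I / √k : ℂ)) ?_ (by fun_prop)
    (fun w hw => ?_) (fun {w} hw => neg_ne_zero.2 (ellipticBranch_ne_zero hk hw)) ?_ ?_ hz
  · refine ContinuousOn.mul (hbranch.comp_continuousOn (ContinuousOn.neg (ContinuousOn.inv₀
      (by fun_prop) fun w hw => mul_ne_zero hk' (hne w hw)))) (by fun_prop)
  · have hw0 := hne w hw
    simp only [Pi.pow_apply]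
    rw [mul_pow, neg_sq, ellipticBranch_sq hk.le (neg_inv_ofReal_mul_im_pos hk hw).le,
      ellipticBranch_sq hk.le (le_of_lt hw)]
    field_simp
    ring
  · simpa using hk
  · simp only [hI]
    rw [div_pow, Complex.I_sq, hsqrt]
    field_simp

lemma im_eq_zero_of_sq_eq_ofReal {w : ℂ} {r : ℝ} (hr : 0 ≤ r) (h : w ^ 2 = r) : w.im = 0 := by
  have hsqrt : w ^ 2 = (√r : ℂ) ^ 2 := by
    rw [h]
    exact_mod_cast (Real.sq_sqrt hr).symm
  obtain rfl | rfl := sq_eq_sq_iff_eq_or_eq_neg.1 hsqrt <;> simp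

lemma ellipticBranch_im_ne_zero (hk : 0 < k) (hz : 0 < z.im) (hre : z.re ≠ 0) :
    (ellipticBranch k z).im ≠ 0 := by
  intro him
  have hreal : ellipticBranch k z = (ellipticBranch k z).re := by
    apply Complex.ext <;> simp [him]
  have hcomplete : (2 * k ^ 2 * z ^ 2 - (1 + k ^ 2)) ^ 2 =
      ((1 - k ^ 2) ^ 2 + 4 * k ^ 2 * (ellipticBranch k z).re ^ 2 : ℝ) := by
    push_cast
    rw [← hreal, ellipticBranch_sq hk.le hz.le]
    ring
  have hzero := im_eq_zero_of_sq_eq_ofReal (by positivity) hcomplete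
  have him_eq : (2 * (k : ℂ) ^ 2 * z ^ 2 - (1 + (k : ℂ) ^ 2)).im = 4 * k ^ 2 * (z.re * z.im) := by
    simp [pow_two]
    ring
  rw [him_eq] at hzero
  have : 4 * k ^ 2 * (z.re * z.im) ≠ 0 := by positivity
  exact this hzero

lemma ellipticBranch_re_ne_zero (hk : 0 < k) (hz : 0 < z.im) (hre : z.re = 0) :
    (ellipticBranch k z).re ≠ 0 := by
  have hz' : z = z.im * Complex.I := by apply Complex.ext <;> simp [hre]
  have hsq : ellipticBranch k z ^ 2 = ((1 + z.im ^ 2) * (1 + k ^ 2 * z.im ^ 2) : ℝ) := by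
    rw [ellipticBranch_sq hk.le hz.le, hz']
    push_cast
    simp [mul_pow]
  have him := im_eq_zero_of_sq_eq_ofReal (by positivity) hsq
  exact fun h => ellipticBranch_ne_zero hk hz (Complex.ext h him)

lemma eqOn_ellipticBranch (hk : 0 < k) {q : ℂ → ℂ}
    (hqc : ContinuousOn q ({z : ℂ | 0 ≤ z.im} \ {1, -1, (1 : ℂ) / k, -(1 : ℂ) / k}))
    (hqsq : ∀ z : ℂ, 0 ≤ z.im → q z ^ 2 = (1 - z ^ 2) * (1 - (k : ℂ) ^ 2 * z ^ 2))
    (hq0 : q 0 = 1) : Set.EqOn q (ellipticBranch k) {z : ℂ | 0 ≤ z.im} := by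
  intro z hz
  have hsq : ∀ w : ℂ, 0 ≤ w.im → q w ^ 2 = ellipticBranch k w ^ 2 := fun w hw =>
    (hqsq w hw).trans (ellipticBranch_sq hk.le hw).symm
  by_cases hsing : z ∈ ({1, -1, (1 : ℂ) / k, -(1 : ℂ) / k} : Set ℂ)
  · have hzero := (ellipticBranch_eq_zero_iff hk hz).2 hsing
    rw [hzero, ← sq_eq_zero_iff, hsq z hz, hzero, zero_pow two_ne_zero]
  have hne {w : ℂ} (hw : w ∈ {z : ℂ | 0 ≤ z.im} \ {1, -1, (1 : ℂ) / k, -(1 : ℂ) / k}) :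
      ellipticBranch k w ≠ 0 := fun h => hw.2 ((ellipticBranch_eq_zero_iff hk hw.1).1 h)
  have hregular {w : ℂ} (hw : 0 < w.im) :
      w ∈ {z : ℂ | 0 ≤ z.im} \ {1, -1, (1 : ℂ) / k, -(1 : ℂ) / k} :=
    ⟨hw.le, fun h => ellipticBranch_ne_zero hk hw ((ellipticBranch_eq_zero_iff hk hw.le).2 h)⟩
  have hconn : IsPreconnected ({z : ℂ | 0 ≤ z.im} \ {1, -1, (1 : ℂ) / k, -(1 : ℂ) / k}) :=
    (convex_halfSpace_im_gt 0).isPreconnected.subset_closure (fun w hw => hregular hw)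
      (Complex.closure_setOfPred_lt_im 0 ▸ Set.sdiff_subset)
  exact hconn.eq_of_sq_eq hqc (continuous_ellipticBranch k).continuousOn
    (fun w hw => hsq w hw.1) hne (y := 0) (by simp [eq_comm (a := (0 : ℂ)), hk.ne'])
    (hq0.trans (ellipticBranch_zero k).symm) ⟨hz, hsing⟩

end Branch

/-- The Schwarz–Christoffel map of the upper half-plane onto a rectangle. -/
def ellipticMap (k : ℝ) : ℂ → ℂ := radialIntegral fun z => (ellipticBranch k z)⁻¹

section Map

variable {k : ℝ} {z : ℂ}

lemma inv_ellipticBranch_norm_le (hk : 0 < k) (hz : 0 ≤ z.im)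
    (hr : ‖z‖ ∉ ({1, -1, 1 / k, -1 / k} : Set ℝ)) :
    ‖(ellipticBranch k z)⁻¹‖ ≤ ellipticDensity k ‖z‖ := by
  rw [norm_inv, ellipticDensity]
  refine inv_anti₀ (Real.sqrt_pos.2 (abs_pos.2 ?_)) (sqrt_abs_quartic_norm_le hk.le hz)
  rwa [Ne, quartic_eq_zero_iff hk.ne']

lemma ellipticBranch_ne_zero_of_norm_notMem (hk : 0 < k) (hz : 0 ≤ z.im)
    (hr : ‖z‖ ∉ ({1, -1, 1 / k, -1 / k} : Set ℝ)) : ellipticBranch k z ≠ 0 := by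
  rw [Ne, ellipticBranch_eq_zero_iff hk hz]
  rintro (rfl | rfl | rfl | rfl) <;> simp [abs_of_pos hk] at hr

lemma continuousOn_ellipticMap (hk : 0 < k) (hk1 : k < 1) :
    ContinuousOn (ellipticMap k) {z : ℂ | 0 ≤ z.im} := by
  have hbranch := continuous_ellipticBranch k
  refine continuousOn_radialIntegral (g := ellipticDensity k)
    (fun r hr w hw => by simpa using mul_nonneg hr.le hw) hbranch.measurable.inv
    (ellipticDensity_nonneg k) (fun T hT => intervalIntegrable_ellipticDensity hk hk1 le_rfl hT) ?_
  filter_upwards [({1, -1, 1 / k, -1 / k} : Set ℝ).toFinite.countable.ae_notMem volume]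
    with r hr _ w hw hwr
  subst hwr
  exact ⟨inv_ellipticBranch_norm_le hk hw hr, (hbranch.continuousAt.inv₀
    (ellipticBranch_ne_zero_of_norm_notMem hk hw hr)).continuousWithinAt⟩

lemma hasDerivAt_ellipticMap (hk : 0 < k) (hz : 0 < z.im) :
    HasDerivAt (ellipticMap k) (ellipticBranch k z)⁻¹ z := by
  have hS : insert 0 {w : ℂ | 0 < w.im} ⊆ {w : ℂ | 0 ≤ w.im} :=
    Set.insert_subset (le_refl (0 : ℝ)) fun w (hw : 0 < w.im) => hw.le
  have hne : ∀ w ∈ insert 0 {w : ℂ | 0 < w.im}, ellipticBranch k w ≠ 0 := by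
    rintro w (rfl | hw)
    · exact fun h => by simpa [h] using ellipticBranch_sq hk.le (z := 0) le_rfl
    · exact ellipticBranch_ne_zero hk hw
  have hconvex : Convex ℝ (insert 0 {w : ℂ | 0 < w.im}) := by
    refine convex_iff_forall_pos.2 ?_
    rintro v (rfl | hv) w (rfl | hw) a b ha hb hab
    · simp
    · exact Or.inr (by simpa [hb] using hw)
    · exact Or.inr (by simpa [ha] using hv)
    · exact Or.inr (convex_halfSpace_im_gt 0 hv hw ha.le hb.le hab)
  refine (hasDerivWithinAt_radialIntegral hconvex (Set.mem_insert _ _)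
    (fun w hw => (differentiableWithinAt_ellipticBranch hk.le hS hw (hne w hw)).inv (hne w hw))
    (Set.mem_insert_of_mem _ hz)).hasDerivAt ?_
  exact mem_of_superset ((isOpen_lt continuous_const Complex.continuous_im).mem_nhds hz)
    (Set.subset_insert _ _)

open scoped ComplexConjugate in
lemma ellipticMap_neg_conj (k : ℝ) (z : ℂ) :
    ellipticMap k (-conj z) = -conj (ellipticMap k z) :=
  radialIntegral_neg_conj (fun w => by rw [ellipticBranch_neg_conj, map_inv₀]) z

lemma inv_ellipticBranch_ofReal_of_mem_Icc (hk : 0 ≤ k) (hk1 : k ≤ 1) {x : ℝ}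
    (hx : x ∈ Set.Icc (0 : ℝ) 1) : (ellipticBranch k x)⁻¹ = ellipticDensity k x := by
  rw [ellipticBranch_ofReal_of_mem_Icc hk hk1 hx, ellipticDensity, Complex.ofReal_inv]

lemma inv_ellipticBranch_ofReal_of_mem_Icc_inv (hk : 0 < k) {x : ℝ}
    (hx : x ∈ Set.Icc 1 (1 / k)) :
    (ellipticBranch k x)⁻¹ = ellipticDensity k x * Complex.I := by
  rw [ellipticBranch_ofReal_of_mem_Icc_inv hk hx, ellipticDensity, Complex.ofReal_inv, mul_inv,
    Complex.inv_I, inv_neg, neg_mul_neg]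

lemma ellipticMap_ofReal_of_mem_Icc (hk : 0 ≤ k) (hk1 : k ≤ 1) {x : ℝ}
    (hx : x ∈ Set.Icc (0 : ℝ) 1) :
    ellipticMap k x = ↑(∫ t in (0 : ℝ)..x, ellipticDensity k t) := by
  rw [ellipticMap, radialIntegral_ofReal, ← intervalIntegral.integral_ofReal]
  refine intervalIntegral.integral_congr fun t ht => ?_
  rw [Set.uIcc_of_le hx.1] at ht
  exact inv_ellipticBranch_ofReal_of_mem_Icc hk hk1 ⟨ht.1, ht.2.trans hx.2⟩

lemma ellipticMap_one (hk : 0 ≤ k) (hk1 : k ≤ 1) : ellipticMap k 1 = ellipticK (k ^ 2) := by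
  have := ellipticMap_ofReal_of_mem_Icc hk hk1 (Set.right_mem_Icc.2 zero_le_one)
  rwa [integral_ellipticDensity_zero_one (by rwa [abs_of_nonneg hk]), Complex.ofReal_one] at this

lemma ellipticMap_ofReal_of_mem_Icc_inv (hk : 0 < k) (hk1 : k < 1) {x : ℝ}
    (hx : x ∈ Set.Icc 1 (1 / k)) :
    ellipticMap k x =
      ellipticK (k ^ 2) + ↑(∫ t in (1 : ℝ)..x, ellipticDensity k t) * Complex.I := by
  have hx0 : 0 ≤ x := zero_le_one.trans hx.1
  have hone : ∀ t ∈ Set.uIcc 0 (1 : ℝ), (ellipticDensity k t : ℂ) = (ellipticBranch k t)⁻¹ := by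
    intro t ht
    rw [Set.uIcc_of_le zero_le_one] at ht
    exact (inv_ellipticBranch_ofReal_of_mem_Icc hk.le hk1.le ht).symm
  have hinv : ∀ t ∈ Set.uIcc 1 x,
      (ellipticDensity k t : ℂ) * Complex.I = (ellipticBranch k t)⁻¹ := by
    intro t ht
    rw [Set.uIcc_of_le hx.1] at ht
    exact (inv_ellipticBranch_ofReal_of_mem_Icc_inv hk ⟨ht.1, ht.2.trans hx.2⟩).symm
  have hdensity {a b : ℝ} (ha : 0 ≤ a) (hb : 0 ≤ b) :
      IntervalIntegrable (fun t => (ellipticDensity k t : ℂ)) volume a b :=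
    let h := intervalIntegrable_ellipticDensity hk hk1 ha hb
    ⟨h.1.ofReal, h.2.ofReal⟩
  have hsplit := intervalIntegral.integral_add_adjacent_intervals
    ((hdensity le_rfl zero_le_one).congr fun t ht => hone t (Set.uIoc_subset_uIcc ht))
    (((hdensity zero_le_one hx0).mul_const Complex.I).congr fun t ht =>
      hinv t (Set.uIoc_subset_uIcc ht))
  rw [ellipticMap, radialIntegral_ofReal, ← hsplit, ← intervalIntegral.integral_congr hone,
    ← intervalIntegral.integral_congr hinv, intervalIntegral.integral_mul_const,
    intervalIntegral.integral_ofReal, intervalIntegral.integral_ofReal,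
    integral_ellipticDensity_zero_one (by rw [abs_of_pos hk]; exact hk1.le)]

lemma ellipticMap_one_div (hk : 0 < k) (hk1 : k < 1) :
    ellipticMap k (1 / k) = ellipticK (k ^ 2) + ellipticK (1 - k ^ 2) * Complex.I := by
  have := ellipticMap_ofReal_of_mem_Icc_inv hk hk1
    (Set.right_mem_Icc.2 ((one_le_div hk).2 hk1.le))
  rwa [integral_ellipticDensity_one_inv hk hk1, Complex.ofReal_div, Complex.ofReal_one] at this

lemma ellipticMap_neg_ofReal (k x : ℝ) :
    ellipticMap k (-x) = -(starRingEnd ℂ) (ellipticMap k x) := by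
  simpa using ellipticMap_neg_conj k x

lemma ellipticMap_neg_one (hk : 0 ≤ k) (hk1 : k ≤ 1) :
    ellipticMap k (-1) = -ellipticK (k ^ 2) := by
  have := ellipticMap_neg_ofReal k 1
  rwa [Complex.ofReal_one, ellipticMap_one hk hk1, Complex.conj_ofReal] at this

lemma ellipticMap_neg_one_div (hk : 0 < k) (hk1 : k < 1) :
    ellipticMap k (-1 / k) = -ellipticK (k ^ 2) + ellipticK (1 - k ^ 2) * Complex.I := by
  have := ellipticMap_neg_ofReal k (1 / k)
  rw [Complex.ofReal_div, Complex.ofReal_one, ellipticMap_one_div hk hk1] at this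
  rw [neg_div, this]
  simp
  ring

lemma eqOn_ellipticMap {q : ℂ → ℂ}
    (hq : Set.EqOn q (ellipticBranch k) {z : ℂ | 0 ≤ z.im}) :
    Set.EqOn (fun z => ∫ s in (0 : ℝ)..1, z / q ((s : ℂ) * z)) (ellipticMap k)
      {z : ℂ | 0 ≤ z.im} := by
  refine fun z hz => intervalIntegral.integral_congr fun s hs => ?_
  rw [Set.uIcc_of_le zero_le_one] at hs
  have him : 0 ≤ ((s : ℂ) * z).im := by simpa using mul_nonneg hs.1 hz
  exact (congrArg (z / ·) (hq him)).trans (div_eq_mul_inv _ _)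

end Map

section Inversion

variable {k : ℝ} {z : ℂ}

lemma hasDerivAt_neg_inv_mul {κ : ℂ} (hκ : κ ≠ 0) (hz : z ≠ 0) :
    HasDerivAt (fun w => -(κ * w)⁻¹) (κ * z ^ 2)⁻¹ z := by
  refine (((hasDerivAt_id z).const_mul κ).fun_inv (mul_ne_zero hκ hz)).fun_neg.congr_deriv ?_
  simp only [id]
  field_simp

lemma hasDerivAt_ellipticMap_neg_inv_add (hk : 0 < k) (hz : 0 < z.im) :
    HasDerivAt (fun w : ℂ => ellipticMap k (-(k * w)⁻¹) + ellipticMap k w) 0 z := by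
  have hz0 : z ≠ 0 := fun h => by simp [h] at hz
  have hcomp := (hasDerivAt_ellipticMap hk (neg_inv_ofReal_mul_im_pos hk hz)).comp z
    (hasDerivAt_neg_inv_mul (Complex.ofReal_ne_zero.2 hk.ne') hz0)
  refine (hcomp.add (hasDerivAt_ellipticMap hk hz)).congr_deriv ?_
  rw [← mul_inv, ellipticBranch_neg_inv hk hz, inv_neg, neg_add_cancel]

/-- The involution `z ↦ -1 / (k z)` corresponds to the half-turn of the rectangle about its
centre. -/
lemma ellipticMap_neg_inv_add (hk : 0 < k) (hk1 : k < 1) (hz : 0 ≤ z.im) (hz0 : z ≠ 0) :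
    ellipticMap k (-(k * z)⁻¹) + ellipticMap k z = ellipticK (1 - k ^ 2) * Complex.I := by
  have hcont : ContinuousOn (fun w : ℂ => ellipticMap k (-(k * w)⁻¹) + ellipticMap k w)
      ({w : ℂ | 0 ≤ w.im} \ {0}) := by
    refine ContinuousOn.add ((continuousOn_ellipticMap hk hk1).comp ?_
      fun w hw => neg_inv_ofReal_mul_im_nonneg hk.le hw.1)
      ((continuousOn_ellipticMap hk hk1).mono Set.sdiff_subset)
    exact (ContinuousOn.inv₀ (by fun_prop)
      fun w hw => mul_ne_zero (Complex.ofReal_ne_zero.2 hk.ne') hw.2).neg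
  have hsub : {w : ℂ | 0 < w.im} ⊆ {w : ℂ | 0 ≤ w.im} \ {0} := fun w (hw : 0 < w.im) =>
    ⟨hw.le, fun h => by simp [Set.mem_singleton_iff.1 h] at hw⟩
  have hconst := eqOn_const_of_hasDerivAt_eq_zero
    (isOpen_lt continuous_const Complex.continuous_im) (convex_halfSpace_im_gt 0).isPreconnected
    hsub (by rw [Complex.closure_setOfPred_lt_im]; exact Set.sdiff_subset) hcont
    (fun w hw => hasDerivAt_ellipticMap_neg_inv_add hk hw) (z₀ := 1) (by simp) ⟨hz, hz0⟩
  have hbase : -((k : ℂ) * 1)⁻¹ = -1 / k := by rw [mul_one, neg_div, one_div]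
  refine hconst.trans ?_
  simp only [hbase]
  rw [ellipticMap_neg_one_div hk hk1, ellipticMap_one hk.le hk1.le]
  ring

lemma tendsto_ellipticMap_cocompact (hk : 0 < k) (hk1 : k < 1) :
    Tendsto (ellipticMap k) (cocompact ℂ ⊓ 𝓟 {z : ℂ | 0 ≤ z.im})
      (𝓝 (ellipticK (1 - k ^ 2) * Complex.I)) := by
  have hupper : ∀ᶠ z in cocompact ℂ ⊓ 𝓟 {z : ℂ | 0 ≤ z.im}, 0 ≤ z.im :=
    mem_inf_of_right (mem_principal_self _)
  have hne : ∀ᶠ z in cocompact ℂ ⊓ 𝓟 {z : ℂ | 0 ≤ z.im}, z ≠ 0 :=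
    mem_inf_of_left isCompact_singleton.compl_mem_cocompact
  have hinv : Tendsto (fun z : ℂ => -(k * z)⁻¹) (cocompact ℂ ⊓ 𝓟 {z : ℂ | 0 ≤ z.im})
      (𝓝[{z : ℂ | 0 ≤ z.im}] 0) := by
    refine tendsto_nhdsWithin_iff.2
      ⟨?_, hupper.mono fun z hz => neg_inv_ofReal_mul_im_nonneg hk.le hz⟩
    rw [← Metric.cobounded_eq_cocompact]
    simpa [mul_comm] using
      ((tendsto_inv₀_cobounded (α := ℂ)).mul_const (k : ℂ)⁻¹).neg.mono_left inf_le_left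
  have hzero : Tendsto (ellipticMap k) (𝓝[{z : ℂ | 0 ≤ z.im}] 0) (𝓝 0) := by
    simpa [ellipticMap, radialIntegral_zero] using
      (continuousOn_ellipticMap hk hk1 0 (le_refl (0 : ℝ))).tendsto
  have hlim := (hzero.comp hinv).const_sub ((ellipticK (1 - k ^ 2) : ℂ) * Complex.I)
  rw [sub_zero] at hlim
  refine hlim.congr' ?_
  filter_upwards [hupper, hne] with z hz hz0
  exact sub_eq_of_eq_add' (ellipticMap_neg_inv_add hk hk1 hz hz0).symm

end Inversion

/-- The closed rectangle with corners `±K(k²)` and `±K(k²) + iK(1 - k²)`. -/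
def ellipticRectangle (k : ℝ) : Set ℂ :=
  Set.Icc (-ellipticK (k ^ 2)) (ellipticK (k ^ 2)) ×ℂ Set.Icc 0 (ellipticK (1 - k ^ 2))

section Rectangle

variable {k : ℝ} {z w : ℂ}

lemma isClosed_ellipticRectangle (k : ℝ) : IsClosed (ellipticRectangle k) :=
  isClosed_Icc.reProdIm isClosed_Icc

lemma convex_ellipticRectangle (k : ℝ) : Convex ℝ (ellipticRectangle k) :=
  ((convex_Icc _ _).is_linear_preimage Complex.reLm.isLinear).inter
    ((convex_Icc _ _).is_linear_preimage Complex.imLm.isLinear)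

lemma interior_ellipticRectangle (k : ℝ) : interior (ellipticRectangle k) =
    {w : ℂ | -ellipticK (k ^ 2) < w.re ∧ w.re < ellipticK (k ^ 2) ∧
      0 < w.im ∧ w.im < ellipticK (1 - k ^ 2)} := by
  ext w
  rw [ellipticRectangle, Complex.interior_reProdIm, interior_Icc, interior_Icc,
    Complex.mem_reProdIm]
  exact and_assoc

lemma mem_frontier_ellipticRectangle (hk : 0 < k) (hk1 : k < 1) :
    w ∈ frontier (ellipticRectangle k) ↔
      |w.re| ≤ ellipticK (k ^ 2) ∧ (w.im = 0 ∨ w.im = ellipticK (1 - k ^ 2)) ∨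
      |w.re| = ellipticK (k ^ 2) ∧ w.im ∈ Set.Icc 0 (ellipticK (1 - k ^ 2)) := by
  have hK : 0 ≤ ellipticK (k ^ 2) := ellipticK_sq_nonneg (by rw [abs_of_pos hk]; exact hk1.le)
  rw [ellipticRectangle, Complex.frontier_reProdIm, closure_Icc, closure_Icc,
    frontier_Icc (neg_le_self hK), frontier_Icc (ellipticK_one_sub_sq_nonneg hk hk1),
    abs_eq hK, abs_le, or_comm (a := w.re = _)]
  rfl

lemma ellipticMap_ofReal_mem_frontier_of_nonneg (hk : 0 < k) (hk1 : k < 1) {x : ℝ} (hx : 0 ≤ x) :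
    ellipticMap k x ∈ frontier (ellipticRectangle k) ∧ 0 ≤ (ellipticMap k x).re := by
  have habs : |k| ≤ 1 := by rw [abs_of_pos hk]; exact hk1.le
  have hA {y : ℝ} (hy : y ∈ Set.Icc 0 1) := integral_ellipticDensity_zero_one habs ▸
    integral_ellipticDensity_mem_Icc hk hk1 le_rfl hy
  rw [mem_frontier_ellipticRectangle hk hk1]
  rcases le_total x 1 with hx1 | hx1
  · rw [ellipticMap_ofReal_of_mem_Icc hk.le hk1.le ⟨hx, hx1⟩]
    obtain ⟨hA0, hAK⟩ := hA ⟨hx, hx1⟩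
    simp [abs_of_nonneg, hA0, hAK]
  rcases le_total x (1 / k) with hxk | hxk
  · rw [ellipticMap_ofReal_of_mem_Icc_inv hk hk1 ⟨hx1, hxk⟩]
    have hB := integral_ellipticDensity_one_inv hk hk1 ▸
      integral_ellipticDensity_mem_Icc hk hk1 zero_le_one ⟨hx1, hxk⟩
    simp [abs_of_nonneg, ellipticK_sq_nonneg habs, hB.1, hB.2]
  · have hkx : 1 ≤ k * x := (div_le_iff₀' hk).1 hxk
    have hy : (k * x)⁻¹ ∈ Set.Icc (0 : ℝ) 1 := ⟨by positivity, inv_le_one_of_one_le₀ hkx⟩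
    have hrefl := ellipticMap_neg_ofReal k (k * x)⁻¹
    rw [ellipticMap_ofReal_of_mem_Icc hk.le hk1.le hy, Complex.conj_ofReal] at hrefl
    have hinv := ellipticMap_neg_inv_add hk hk1 (z := x) le_rfl
      (Complex.ofReal_ne_zero.2 (zero_lt_one.trans_le hx1).ne')
    rw [← Complex.ofReal_mul, ← Complex.ofReal_inv, hrefl, neg_add_eq_iff_eq_add] at hinv
    rw [hinv]
    simp [-mul_inv_rev, abs_of_nonneg (hA hy).1, (hA hy).1, (hA hy).2]

lemma ellipticMap_ofReal_mem_frontier (hk : 0 < k) (hk1 : k < 1) (x : ℝ) :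
    ellipticMap k x ∈ frontier (ellipticRectangle k) := by
  rcases le_total 0 x with hx | hx
  · exact (ellipticMap_ofReal_mem_frontier_of_nonneg hk hk1 hx).1
  · have hneg := (ellipticMap_ofReal_mem_frontier_of_nonneg hk hk1 (neg_nonneg.2 hx)).1
    rw [mem_frontier_ellipticRectangle hk hk1] at hneg ⊢
    rw [Complex.ofReal_neg, ellipticMap_neg_ofReal] at hneg
    simpa using hneg

end Rectangle

section Image

variable {k : ℝ} {z : ℂ} {U : Set ℂ}

lemma isOpen_image_ellipticMap (hk : 0 < k) (hU : IsOpen U) (hUu : U ⊆ {z : ℂ | 0 < z.im}) :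
    IsOpen (ellipticMap k '' U) := by
  have hdiff : DifferentiableOn ℂ (ellipticMap k) U := fun w hw =>
    (hasDerivAt_ellipticMap hk (hUu hw)).differentiableAt.differentiableWithinAt
  refine isOpen_iff_mem_nhds.2 ?_
  rintro _ ⟨z, hz, rfl⟩
  have hstrict := (hdiff.analyticAt (hU.mem_nhds hz)).hasStrictDerivAt
  rw [(hasDerivAt_ellipticMap hk (hUu hz)).deriv] at hstrict
  rw [← hstrict.map_nhds_eq (inv_ne_zero (ellipticBranch_ne_zero hk (hUu hz)))]
  exact image_mem_map (hU.mem_nhds hz)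

lemma isBounded_image_ellipticMap (hk : 0 < k) (hk1 : k < 1) :
    Bornology.IsBounded (ellipticMap k '' {z : ℂ | 0 ≤ z.im}) :=
  (isCompact_insert_image (isClosed_le continuous_const Complex.continuous_im)
    (continuousOn_ellipticMap hk hk1) (tendsto_ellipticMap_cocompact hk hk1)).isBounded.subset
    (Set.subset_insert _ _)

lemma frontier_image_ellipticMap_subset (hk : 0 < k) (hk1 : k < 1) (hU : IsOpen U)
    (hUu : U ⊆ {z : ℂ | 0 < z.im}) : frontier (ellipticMap k '' U) ⊆
      insert (ellipticK (1 - k ^ 2) * Complex.I) (ellipticMap k '' frontier U) := by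
  have hclosure : closure U ⊆ {z : ℂ | 0 ≤ z.im} :=
    Complex.closure_setOfPred_lt_im 0 ▸ closure_mono hUu
  exact frontier_image_subset hU (isOpen_image_ellipticMap hk hU hUu)
    ((continuousOn_ellipticMap hk hk1).mono hclosure)
    ((tendsto_ellipticMap_cocompact hk hk1).mono_left
      (inf_le_inf_left _ (principal_mono.2 hclosure)))

lemma image_ellipticMap (hk : 0 < k) (hk1 : k < 1) :
    ellipticMap k '' {z : ℂ | 0 < z.im} = interior (ellipticRectangle k) := by
  have hopen : IsOpen {z : ℂ | 0 < z.im} := isOpen_lt continuous_const Complex.continuous_im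
  have hsub : {z : ℂ | 0 < z.im} ⊆ {z : ℂ | 0 ≤ z.im} := fun z (hz : 0 < z.im) => hz.le
  refine eq_interior_of_frontier_subset_frontier (isOpen_image_ellipticMap hk hopen subset_rfl)
    ((isBounded_image_ellipticMap hk hk1).subset (Set.image_mono hsub))
    ⟨_, Complex.I, by simp, rfl⟩ (isClosed_ellipticRectangle k) (convex_ellipticRectangle k) ?_
  refine (frontier_image_ellipticMap_subset hk hk1 hopen subset_rfl).trans
    (Set.insert_subset ?_ ?_)
  · rw [mem_frontier_ellipticRectangle hk hk1]
    simp [ellipticK_sq_nonneg (abs_of_pos hk ▸ hk1.le)]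
  · rw [Complex.frontier_setOfPred_lt_im]
    rintro _ ⟨z, hz : z.im = 0, rfl⟩
    obtain ⟨x, rfl⟩ : ∃ x : ℝ, (x : ℂ) = z := ⟨z.re, Complex.ext rfl hz.symm⟩
    exact ellipticMap_ofReal_mem_frontier hk hk1 x

lemma ellipticMap_re_eq_zero (k : ℝ) (hz : z.re = 0) : (ellipticMap k z).re = 0 := by
  have hfix : -(starRingEnd ℂ) z = z := Complex.ext (by simp [hz]) (by simp)
  have hre := congrArg Complex.re (ellipticMap_neg_conj k z)
  rw [hfix, Complex.neg_re, Complex.conj_re] at hre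
  exact self_eq_neg.1 hre

lemma ellipticMap_re_nonneg_of_mem_frontier (hk : 0 < k) (hk1 : k < 1)
    (hz : z ∈ frontier (Set.Ioi 0 ×ℂ Set.Ioi 0)) : 0 ≤ (ellipticMap k z).re := by
  rw [Complex.frontier_reProdIm, closure_Ioi, frontier_Ioi] at hz
  rcases hz with ⟨hre, him⟩ | ⟨hre, -⟩
  · obtain ⟨x, rfl⟩ : ∃ x : ℝ, (x : ℂ) = z := ⟨z.re, Complex.ext rfl him.symm⟩
    exact (ellipticMap_ofReal_mem_frontier_of_nonneg hk hk1 hre).2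
  · exact (ellipticMap_re_eq_zero k hre).ge

lemma ellipticMap_re_pos (hk : 0 < k) (hk1 : k < 1) (hz : 0 < z.im) (hre : 0 < z.re) :
    0 < (ellipticMap k z).re := by
  have hopen : IsOpen (Set.Ioi (0 : ℝ) ×ℂ Set.Ioi (0 : ℝ)) := isOpen_Ioi.reProdIm isOpen_Ioi
  have hupper : Set.Ioi (0 : ℝ) ×ℂ Set.Ioi (0 : ℝ) ⊆ {z : ℂ | 0 < z.im} := fun w hw => hw.2
  have hfrontier : frontier (ellipticMap k '' (Set.Ioi 0 ×ℂ Set.Ioi 0)) ⊆ {w : ℂ | 0 ≤ w.re} := by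
    refine (frontier_image_ellipticMap_subset hk hk1 hopen hupper).trans
      (Set.insert_subset (by simp) ?_)
    rintro _ ⟨w, hw, rfl⟩
    exact ellipticMap_re_nonneg_of_mem_frontier hk hk1 hw
  have hsub : Set.Ioi (0 : ℝ) ×ℂ Set.Ioi (0 : ℝ) ⊆ {z : ℂ | 0 ≤ z.im} :=
    hupper.trans fun w (hw : 0 < w.im) => hw.le
  have hbounded : Bornology.IsBounded (ellipticMap k '' (Set.Ioi 0 ×ℂ Set.Ioi 0)) :=
    (isBounded_image_ellipticMap hk hk1).subset (Set.image_mono hsub)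
  have hpos := subset_interior_of_frontier_subset (isOpen_image_ellipticMap hk hopen hupper)
    hbounded (convex_halfSpace_re_ge 0) hfrontier ⟨z, ⟨hre, hz⟩, rfl⟩
  rwa [Complex.interior_setOfPred_le_re] at hpos

lemma ellipticMap_re_neg (hk : 0 < k) (hk1 : k < 1) (hz : 0 < z.im) (hre : z.re < 0) :
    (ellipticMap k z).re < 0 := by
  have hpos := ellipticMap_re_pos hk hk1 (z := -(starRingEnd ℂ) z) (by simpa) (by simpa)
  simpa [ellipticMap_neg_conj] using hpos

lemma sign_ellipticMap_re (hk : 0 < k) (hk1 : k < 1) (hz : 0 < z.im) :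
    SignType.sign (ellipticMap k z).re = SignType.sign z.re := by
  rcases lt_trichotomy z.re 0 with hre | hre | hre
  · rw [sign_neg hre, sign_neg (ellipticMap_re_neg hk hk1 hz hre)]
  · rw [hre, ellipticMap_re_eq_zero k hre]
  · rw [sign_pos hre, sign_pos (ellipticMap_re_pos hk hk1 hz hre)]

lemma injOn_ellipticMap_sign_re (hk : 0 < k) (s : SignType) :
    Set.InjOn (ellipticMap k) {z : ℂ | 0 < z.im ∧ SignType.sign z.re = s} := by
  have hsign : Convex ℝ {x : ℝ | SignType.sign x = s} :=
    (Set.ordConnected_singleton.preimage_mono SignType.sign.monotone).convex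
  have hconvex : Convex ℝ {z : ℂ | 0 < z.im ∧ SignType.sign z.re = s} :=
    (convex_halfSpace_im_gt 0).inter (hsign.is_linear_preimage Complex.reLm.isLinear)
  refine injOn_of_re_mul_deriv_ne_zero hconvex
    (fun z hz => (hasDerivAt_ellipticMap hk hz.1).hasDerivWithinAt)
    (if s = 0 then 1 else Complex.I) fun z hz => ?_
  have hne := ellipticBranch_ne_zero hk hz.1
  split_ifs with hs
  · have hre := ellipticBranch_re_ne_zero hk hz.1 (sign_eq_zero_iff.1 (hz.2.trans hs))
    simpa [Complex.inv_re, hne] using hre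
  · have him := ellipticBranch_im_ne_zero hk hz.1 fun h => hs (hz.2 ▸ sign_eq_zero_iff.2 h)
    simpa [Complex.inv_im, hne] using him

lemma injOn_ellipticMap (hk : 0 < k) (hk1 : k < 1) :
    Set.InjOn (ellipticMap k) {z : ℂ | 0 < z.im} := by
  intro z hz w hw hzw
  refine injOn_ellipticMap_sign_re hk _ ⟨hz, rfl⟩ ⟨hw, ?_⟩ hzw
  rw [← sign_ellipticMap_re hk hk1 hz, ← sign_ellipticMap_re hk hk1 hw, hzw]

end Image

end SchwarzChristoffel

/-- The Schwarz–Christoffel map onto a rectangle: fix `k ∈ (0,1)` and let `q` be the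
branch of `√((1−z²)(1−k²z²))` on the closed upper half-plane which is positive on
`(−1,1)` (continuous off the four real singular points, holomorphic on the open upper
half-plane). Then `ψ(z) = ∫₀^z dt/q(t)` (integrated along segments in the closed
upper half-plane) is continuous on the closed upper half-plane, holomorphic and
injective on `ℍ`, maps `ℍ` onto the open rectangle with corners `±K(k²)` and
`±K(k²) + iK(1−k²)`, and sends `−1/k, −1, 1, 1/k` to the four corners. -/
theorem schwarz_christoffel_rectangle (k : ℝ) (hk : k ∈ Set.Ioo (0 : ℝ) 1)
    (q : ℂ → ℂ)
    (hqc : ContinuousOn q ({z : ℂ | 0 ≤ z.im} \ {1, -1, (1 : ℂ) / k, -(1 : ℂ) / k}))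
    (hqd : ∀ z : ℂ, 0 < z.im → DifferentiableAt ℂ q z)
    (hqsq : ∀ z : ℂ, 0 ≤ z.im → (q z) ^ 2 = (1 - z ^ 2) * (1 - (k : ℂ) ^ 2 * z ^ 2))
    (hqpos : ∀ x : ℝ, -1 < x → x < 1 →
      q (x : ℂ) = ((Real.sqrt ((1 - x ^ 2) * (1 - k ^ 2 * x ^ 2)) : ℝ) : ℂ))
    (ψ : ℂ → ℂ) (hψ : ψ = fun z => ∫ s in (0 : ℝ)..1, z / q ((s : ℂ) * z)) :
    ContinuousOn ψ {z : ℂ | 0 ≤ z.im} ∧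
    DifferentiableOn ℂ ψ {z : ℂ | 0 < z.im} ∧
    Set.InjOn ψ {z : ℂ | 0 < z.im} ∧
    ψ '' {z : ℂ | 0 < z.im} =
      {w : ℂ | -ellipticK (k ^ 2) < w.re ∧ w.re < ellipticK (k ^ 2) ∧
        0 < w.im ∧ w.im < ellipticK (1 - k ^ 2)} ∧
    ψ (-(1 : ℂ) / k) = -(ellipticK (k ^ 2) : ℂ) + (ellipticK (1 - k ^ 2) : ℂ) * Complex.I ∧
    ψ (-1) = -(ellipticK (k ^ 2) : ℂ) ∧
    ψ 1 = (ellipticK (k ^ 2) : ℂ) ∧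
    ψ ((1 : ℂ) / k) = (ellipticK (k ^ 2) : ℂ) + (ellipticK (1 - k ^ 2) : ℂ) * Complex.I := by
  obtain ⟨hk0, hk1⟩ := hk
  have hq0 : q 0 = 1 := by simpa using hqpos 0 (by norm_num) one_pos
  have hψq : Set.EqOn ψ (SchwarzChristoffel.ellipticMap k) {z : ℂ | 0 ≤ z.im} := hψ ▸
    SchwarzChristoffel.eqOn_ellipticMap (SchwarzChristoffel.eqOn_ellipticBranch hk0 hqc hqsq hq0)
  have hupper : Set.EqOn ψ (SchwarzChristoffel.ellipticMap k) {z : ℂ | 0 < z.im} :=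
    hψq.mono fun z (hz : 0 < z.im) => hz.le
  refine ⟨(SchwarzChristoffel.continuousOn_ellipticMap hk0 hk1).congr hψq,
    DifferentiableOn.congr (fun z hz => ?_) hupper,
    (SchwarzChristoffel.injOn_ellipticMap hk0 hk1).congr hupper.symm, ?_, ?_, ?_, ?_, ?_⟩
  · exact (SchwarzChristoffel.hasDerivAt_ellipticMap hk0
      hz).differentiableAt.differentiableWithinAt
  · rw [hupper.image_eq, SchwarzChristoffel.image_ellipticMap hk0 hk1,
      SchwarzChristoffel.interior_ellipticRectangle]
  · rw [hψq (by simp [Complex.div_im]), SchwarzChristoffel.ellipticMap_neg_one_div hk0 hk1]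
  · rw [hψq (by simp), SchwarzChristoffel.ellipticMap_neg_one hk0.le hk1.le]
  · rw [hψq (by simp), SchwarzChristoffel.ellipticMap_one hk0.le hk1.le]
  · rw [hψq (by simp), SchwarzChristoffel.ellipticMap_one_div hk0 hk1]
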